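/- arXiv:2301.13566 — 2 statements merged into one kernel-verified Lean document; each statement's English description precedes it below -/
import Mathlib

section
/- Let n ≥ 1, let M ⊆ A* be a code with a^n ∈ M, and let ω ∈ A* be any word. Then the set {a^n} ∪ C_M(ω) is a code. -/
/-!
Let `N = {a^n} ∪ C_M(ω)`. The free monoid endomorphism `subst K` fixing every letter except `b` and
sending `b` to `a^K ω a^K` maps any given word of `N*` into `M*` once `K` is a large enough multiple
of `n`: if `a^i ω a^j ∈ M*`, then the image `a^(i mod n + K) ω a^(K + j mod n)` of the corresponding
bayonet word differs from `a^i ω a^j` only by powers of `a^n` on both sides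
(`exists_subst_mem_closure`).

Uniqueness of factorization over `N` is proved from left to right. In two factorizations of the same
word, the power of `a` in front of the first `b` forces the first factors to be both `a^n`, or
bayonet words `a^i b a^j` and `a^i b a^j'` with the same `i`. If `j' = j + d`, the cofactors are
`X = a^d X'` and `X'`. Applying `subst K` gives `u`, `u a^d`, `v`, `a^d v ∈ M*`. The submonoid
generated by a code is stable (`IsCode.mem_closure_of_stable`), hence `a^d ∈ M*`. The only powers of
`a` in `M*` are those of `a^n`, so `n ∣ d`; as `d < n`, the two first factors agree.
-/

namespace CBC

variable {A : Type*}

/-- `a^i` -/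
def apow (a : A) (i : ℕ) : FreeMonoid A := (FreeMonoid.of a) ^ i

/-- the bayonet word `a^i b a^j` -/
def bay (a b : A) (i j : ℕ) : FreeMonoid A := apow a i * FreeMonoid.of b * apow a j

/-- `X` is a (variable-length) code -/
def IsCode (X : Set (FreeMonoid A)) : Prop :=
  ∀ l m : List (FreeMonoid A), (∀ w ∈ l, w ∈ X) → (∀ w ∈ m, w ∈ X) →
    l.prod = m.prod → l = m

/-- `X` is a maximal code -/
def IsMaximalCode (X : Set (FreeMonoid A)) : Prop :=
  IsCode X ∧ ∀ Y : Set (FreeMonoid A), IsCode Y → X ⊆ Y → Y = X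

/-- a bayonet code : a code included in `a^* b a^*` -/
def IsBayonetCode (a b : A) (Y : Set (FreeMonoid A)) : Prop :=
  (∀ w ∈ Y, ∃ i j : ℕ, w = bay a b i j) ∧ IsCode Y

/-- an `n`-complete bayonet code -/
def IsCbc (a b : A) (n : ℕ) (X : Set (FreeMonoid A)) : Prop :=
  (∀ w ∈ X, ∃ i < n, ∃ j < n, w = bay a b i j) ∧ X.ncard = n ∧
    IsCode (insert (apow a n) X)

/-- the composition `X ∘_r Y` -/
def comp (a b : A) (n r : ℕ) (X Y : Set (FreeMonoid A)) : Set (FreeMonoid A) :=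
  { w | ∃ i j k l : ℕ, bay a b i j ∈ X ∧ bay a b k l ∈ Y ∧ (j + k) % n = r ∧
        w = bay a b i l }

/-- iterated composition `X ∘_{r₁} X₁ ∘_{r₂} ⋯ ∘_{r_k} X_k` -/
def compList (a b : A) (n : ℕ) (X : Set (FreeMonoid A))
    (rest : List (ℕ × Set (FreeMonoid A))) : Set (FreeMonoid A) :=
  rest.foldl (fun acc p => comp a b n p.1 acc p.2) X

/-- a compatible set of `n`-cbc -/
def Compatible (a b : A) (n : ℕ) (E : Set (Set (FreeMonoid A))) : Prop :=
  ∀ X ∈ E, ∀ rest : List (ℕ × Set (FreeMonoid A)),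
    (∀ p ∈ rest, p.1 < n ∧ p.2 ∈ E) → IsCbc a b n (compList a b n X rest)

/-- a stable set of `n`-cbc -/
def StableSet (a b : A) (n : ℕ) (S : Set (Set (FreeMonoid A))) : Prop :=
  (∀ X ∈ S, IsCbc a b n X) ∧ ∀ X ∈ S, ∀ Y ∈ S, ∀ r < n, comp a b n r X Y ∈ S

/-- `E^∘`, the smallest stable set containing `E` -/
def stableClosure (a b : A) (n : ℕ) (E : Set (Set (FreeMonoid A))) :
    Set (Set (FreeMonoid A)) :=
  ⋂₀ { S | StableSet a b n S ∧ E ⊆ S }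

/-- `(P,Q)` is a border of the `n`-cbc `X` : the map
`P × X × Q → (ZMod n)²`, `(p, a^i b a^j, q) ↦ (p + i, j + q)` is a bijection. -/
def IsBorder (a b : A) (n : ℕ) (P Q : Set ℤ) (X : Set (FreeMonoid A)) : Prop :=
  ∀ c : ZMod n × ZMod n, ∃! t : ℤ × (ℕ × ℕ) × ℤ,
    t.1 ∈ P ∧ bay a b t.2.1.1 t.2.1.2 ∈ X ∧ t.2.2 ∈ Q ∧
    (t.1 : ZMod n) + (t.2.1.1 : ZMod n) = c.1 ∧
    (t.2.1.2 : ZMod n) + (t.2.2 : ZMod n) = c.2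

/-- `(P,Q)` is a border of every element of `E` -/
def BordersFamily (a b : A) (n : ℕ) (P Q : Set ℤ)
    (E : Set (Set (FreeMonoid A))) : Prop :=
  ∀ X ∈ E, IsBorder a b n P Q X

def toZ (S : Set ℕ) : Set ℤ := (fun i : ℕ => (i : ℤ)) '' S

def toZModN (n : ℕ) (S : Set ℕ) : Set (ZMod n) := (fun i : ℕ => (i : ZMod n)) '' S

def toZModZ (n : ℕ) (S : Set ℤ) : Set (ZMod n) := (fun i : ℤ => (i : ZMod n)) '' S

/-- `(P,Q)` is a factorization of size `n` -/
def IsFactorization (n : ℕ) (P Q : Set (ZMod n)) : Prop :=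
  ∀ c : ZMod n, ∃! pq : ZMod n × ZMod n, pq.1 ∈ P ∧ pq.2 ∈ Q ∧ pq.1 + pq.2 = c

/-- `L_k^n(Y)` -/
def Lset (a b : A) (n : ℕ) (Y : Set (FreeMonoid A)) (k : ℕ) : Set ℕ :=
  { i | ∃ i' j' : ℕ, bay a b i' j' ∈ Y ∧ i' % n = i ∧ j' % n = k }

/-- `R_k^n(Y)` -/
def Rset (a b : A) (n : ℕ) (Y : Set (FreeMonoid A)) (k : ℕ) : Set ℕ :=
  { j | ∃ i' j' : ℕ, bay a b i' j' ∈ Y ∧ i' % n = k ∧ j' % n = j }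

/-- `L(Y)` -/
def Lfull (a b : A) (n : ℕ) (Y : Set (FreeMonoid A)) : Set ℕ :=
  { i | ∃ i' j' : ℕ, bay a b i' j' ∈ Y ∧ i' % n = i }

/-- `R(Y)` -/
def Rfam (a b : A) (n : ℕ) (Y : Set (FreeMonoid A)) : Set (Set ℕ) :=
  { R | ∃ k ∈ Lfull a b n Y, R = Rset a b n Y k }

/-- the `n`-cbc `X` borders the set `E` -/
def CbcBorders (a b : A) (n : ℕ) (X : Set (FreeMonoid A))
    (E : Set (Set (FreeMonoid A))) : Prop :=
  ∀ R ∈ Rfam a b n X,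
    IsFactorization n (toZModN n R) (toZModN n (Lfull a b n X)) ∧
    BordersFamily a b n (toZ R) (toZ (Lfull a b n X)) E

/-- `R_k^n(a^P X)` -/
def RsetShift (a b : A) (n : ℕ) (P : Set ℤ) (X : Set (FreeMonoid A)) (k : ℕ) :
    Set ℕ :=
  { j | j < n ∧ ∃ (p : ℤ) (i' j' : ℕ), p ∈ P ∧ bay a b i' j' ∈ X ∧
        ((p + (i' : ℤ) : ℤ) : ZMod n) = (k : ZMod n) ∧ j' % n = j }

/-- `L_k^n(Y a^Q)` -/
def LsetShift (a b : A) (n : ℕ) (Y : Set (FreeMonoid A)) (Q : Set ℤ) (k : ℕ) :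
    Set ℕ :=
  { i | i < n ∧ ∃ (i' j' : ℕ) (q : ℤ), q ∈ Q ∧ bay a b i' j' ∈ Y ∧
        i' % n = i ∧ (((j' : ℤ) + q : ℤ) : ZMod n) = (k : ZMod n) }

/-- `H_t(X)`, for `X ⊆ { a^i b a^j : i, j ∈ [n) }` -/
def Hfam (a b : A) (n t : ℕ) (X : Set (FreeMonoid A)) : Set (Set (FreeMonoid A)) :=
  { Y | ∃ f : ℕ → ℕ → ℕ → ℕ, (∀ i j s, f i j s < t) ∧
      Y = { w | ∃ i j s : ℕ, bay a b i j ∈ X ∧ s < t ∧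
                w = bay a b (i + f i j s * n) (j + s * n) } }

/-- `E' ∈ ℋ_t(E)` -/
def HfamSet (a b : A) (n t : ℕ) (E E' : Set (Set (FreeMonoid A))) : Prop :=
  (∀ Y ∈ E', ∃ X ∈ E, Y ∈ Hfam a b n t X) ∧
  (∀ X ∈ E, ∃ Y ∈ E', Y ∈ Hfam a b n t X)

/-- the dual `X̃` of a bayonet code -/
def dual (a b : A) (X : Set (FreeMonoid A)) : Set (FreeMonoid A) :=
  { w | ∃ i j : ℕ, bay a b i j ∈ X ∧ w = bay a b j i }

/-- a set `E` of `n`-cbc is of Hajós -/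
def IsHajos (a b : A) (n : ℕ) (E : Set (Set (FreeMonoid A))) : Prop :=
  ∃ (k : ℕ) (ts : ℕ → ℕ) (Ys : ℕ → Set (FreeMonoid A)),
    (∀ i, 1 ≤ i → i ≤ k → 1 < ts i) ∧
    (∏ i ∈ Finset.Icc 1 k, ts i) = n ∧
    Ys 0 = {FreeMonoid.of b} ∧
    (∀ i, i ≤ k - 1 → IsBayonetCode a b (Ys i)) ∧
    (∀ i, 1 ≤ i → i ≤ k - 1 →
      dual a b (Ys i) ∈ Hfam a b (∏ j ∈ Finset.Icc 1 (i - 1), ts j) (ts i) (Ys (i - 1))) ∧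
    (if k = 0 then ∀ Y ∈ E, Y = ({FreeMonoid.of b} : Set (FreeMonoid A))
     else
       (∀ Y ∈ E, Y ∈ Hfam a b (∏ j ∈ Finset.Icc 1 (k - 1), ts j) (ts k) (Ys (k - 1))) ∨
       (∀ Y ∈ E, dual a b Y ∈ Hfam a b (∏ j ∈ Finset.Icc 1 (k - 1), ts j) (ts k) (Ys (k - 1))))

/-- a Krasner factorization of size `n` -/
def IsKrasner (n : ℕ) (P Q : Set ℕ) : Prop :=
  P.Finite ∧ Q.Finite ∧ P.ncard * Q.ncard = n ∧ ∀ k < n, ∃ p ∈ P, ∃ q ∈ Q, k = p + q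

/-- `C_M(ω) = { a^{i mod n} b a^{j mod n} : a^i ω a^j ∈ M^* }` -/
def Cword (a b : A) (n : ℕ) (M : Set (FreeMonoid A)) (ω : FreeMonoid A) :
    Set (FreeMonoid A) :=
  { w | ∃ i j : ℕ, apow a i * ω * apow a j ∈ Submonoid.closure M ∧
        w = bay a b (i % n) (j % n) }

/-! ### Submonoids generated by codes -/

theorem apow_add (a : A) (i j : ℕ) : apow a (i + j) = apow a i * apow a j := pow_add _ _ _

/-- The submonoid generated by a code is stable. -/
theorem IsCode.mem_closure_of_stable {M : Set (FreeMonoid A)} (hM : IsCode M)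
    {u v w : FreeMonoid A} (hu : u ∈ Submonoid.closure M) (hv : v ∈ Submonoid.closure M)
    (huw : u * w ∈ Submonoid.closure M) (hwv : w * v ∈ Submonoid.closure M) :
    w ∈ Submonoid.closure M := by
  obtain ⟨lu, hlu, rfl⟩ := Submonoid.exists_list_of_mem_closure hu
  obtain ⟨lv, hlv, rfl⟩ := Submonoid.exists_list_of_mem_closure hv
  obtain ⟨l₁, hl₁, h₁⟩ := Submonoid.exists_list_of_mem_closure huw
  obtain ⟨l₂, hl₂, h₂⟩ := Submonoid.exists_list_of_mem_closure hwv
  have key : lu ++ l₂ = l₁ ++ lv := by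
    refine hM _ _ (by grind) (by grind) ?_
    rw [List.prod_append, List.prod_append, h₁, h₂, mul_assoc]
  rcases List.append_eq_append_iff.1 key with ⟨t, rfl, rfl⟩ | ⟨t, rfl, rfl⟩
  · rw [List.prod_append] at h₁
    rw [← mul_left_cancel h₁]
    exact Submonoid.list_prod_mem _ fun x hx =>
      Submonoid.subset_closure (hl₁ x (List.mem_append_right _ hx))
  -- Here `u * w` is a prefix of `u`, which leaves no room for `w`.
  · rw [List.prod_append, mul_assoc] at h₁
    have h₃ := congrArg FreeMonoid.length h₁
    simp only [FreeMonoid.length_mul] at h₃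
    have : w = 1 := FreeMonoid.length_eq_zero.1 (by omega)
    rw [this]
    exact one_mem _

/-- If `a^n` belongs to a code `M`, then `M*` contains no powers of `a` but those of `a^n`:
compare the factorizations of `(a^d)^n = (a^n)^d`. -/
theorem IsCode.dvd_of_apow_mem_closure {M : Set (FreeMonoid A)} (hM : IsCode M) {a : A} {n d : ℕ}
    (han : apow a n ∈ M) (hd : apow a d ∈ Submonoid.closure M) : n ∣ d := by
  obtain ⟨l, hl, hld⟩ := Submonoid.exists_list_of_mem_closure hd
  have key : (List.replicate n l).flatten = List.replicate d (apow a n) := by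
    refine hM _ _ ?_ ?_ ?_
    · intro w hw
      obtain ⟨l', hl', hw'⟩ := List.mem_flatten.1 hw
      rw [List.eq_of_mem_replicate hl'] at hw'
      exact hl w hw'
    · intro w hw
      rwa [List.eq_of_mem_replicate hw]
    · rw [List.prod_flatten, List.map_replicate, List.prod_replicate, List.prod_replicate, hld,
        apow, apow, ← pow_mul, ← pow_mul, mul_comm]
  have := congrArg List.length key
  simp only [List.length_flatten, List.map_replicate, List.sum_replicate, List.length_replicate,
    smul_eq_mul] at this
  exact ⟨_, this.symm⟩

/-! ### Substituting `a^K ω a^K` for `b` -/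

open Classical in
/-- The endomorphism of `A*` sending `b` to `a^K ω a^K` and fixing all other letters. -/
noncomputable def subst (a b : A) (ω : FreeMonoid A) (K : ℕ) : FreeMonoid A →* FreeMonoid A :=
  FreeMonoid.lift fun c => if c = b then apow a K * ω * apow a K else FreeMonoid.of c

theorem subst_apow {a b : A} (hab : a ≠ b) (ω : FreeMonoid A) (K i : ℕ) :
    subst a b ω K (apow a i) = apow a i := by
  simp [subst, apow, hab]

theorem subst_bay {a b : A} (hab : a ≠ b) (ω : FreeMonoid A) (K i j : ℕ) :
    subst a b ω K (bay a b i j) = apow a (i + K) * ω * apow a (K + j) := by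
  rw [bay, map_mul, map_mul, subst_apow hab, subst_apow hab, apow_add, apow_add]
  simp [subst, mul_assoc]

/-- Any finite set of words of `{a^n} ∪ C_M(ω)` is sent into `M*` by `subst K`, uniformly for all
large enough multiples `K` of `n`. -/
theorem exists_subst_mem_closure {a b : A} (hab : a ≠ b) {n : ℕ} {M : Set (FreeMonoid A)}
    (han : apow a n ∈ M) (ω : FreeMonoid A) (l : List (FreeMonoid A))
    (hl : ∀ w ∈ l, w ∈ insert (apow a n) (Cword a b n M ω)) :
    ∃ K₀, ∀ K, K₀ ≤ K → n ∣ K → ∀ w ∈ l, subst a b ω K w ∈ Submonoid.closure M := by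
  have hpow : ∀ t, apow a (n * t) ∈ Submonoid.closure M := fun t => by
    rw [apow, pow_mul]
    exact pow_mem (Submonoid.subset_closure han) t
  induction l with
  | nil => exact ⟨0, by simp⟩
  | cons x l ih =>
    obtain ⟨K₁, hK₁⟩ := ih fun w hw => hl w (List.mem_cons_of_mem _ hw)
    suffices h : ∃ K₂, ∀ K, K₂ ≤ K → n ∣ K → subst a b ω K x ∈ Submonoid.closure M by
      obtain ⟨K₂, hK₂⟩ := h
      refine ⟨K₁ + K₂, fun K hK hnK w hw => ?_⟩
      rcases List.mem_cons.1 hw with rfl | hw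
      · exact hK₂ K (by omega) hnK
      · exact hK₁ K (by omega) hnK w hw
    rcases hl x List.mem_cons_self with rfl | ⟨i, j, hij, rfl⟩
    · refine ⟨0, fun K _ _ => ?_⟩
      rw [subst_apow hab]
      exact Submonoid.subset_closure han
    · refine ⟨i + j, ?_⟩
      rintro K hK ⟨q, rfl⟩
      have hi := Nat.div_add_mod i n
      have hj := Nat.div_add_mod j n
      have hiq : i / n ≤ q := Nat.div_le_of_le_mul (by omega)
      have hjq : j / n ≤ q := Nat.div_le_of_le_mul (by omega)
      obtain ⟨s, hs⟩ := Nat.exists_eq_add_of_le hiq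
      obtain ⟨t, ht⟩ := Nat.exists_eq_add_of_le hjq
      have e₁ : i % n + n * q = n * s + i := by rw [hs, mul_add]; omega
      have e₂ : n * q + j % n = j + n * t := by rw [ht, mul_add]; omega
      rw [subst_bay hab, e₁, e₂, apow_add, apow_add]
      have := mul_mem (mul_mem (hpow s) hij) (hpow t)
      simpa only [mul_assoc] using this

/-! ### Comparing two factorizations -/

/-- The number of `a`s in front of the first `b` is determined by the word. -/
theorem apow_mul_of_ne {a b : A} (hab : a ≠ b) {i k : ℕ} (h : i < k) (Y Z : FreeMonoid A) :
    apow a i * (FreeMonoid.of b * Y) ≠ apow a k * Z := by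
  intro e
  obtain ⟨t, rfl⟩ := Nat.exists_eq_add_of_lt h
  rw [add_assoc, apow_add, mul_assoc] at e
  have e' := mul_left_cancel e
  rw [apow, pow_succ', mul_assoc] at e'
  have e'' := congrArg FreeMonoid.toList e'
  rw [FreeMonoid.toList_of_mul, FreeMonoid.toList_of_mul] at e''
  exact hab (List.cons.inj e'').1.symm

/-- Two bayonet words of `C_M(ω)` with the same left exponent that start the same word of
`({a^n} ∪ C_M(ω))*` have right exponents congruent modulo `n`. -/
theorem dvd_of_bay_mul_eq {a b : A} (hab : a ≠ b) {n : ℕ} (hn : 1 ≤ n) {M : Set (FreeMonoid A)}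
    (hM : IsCode M) (han : apow a n ∈ M) {ω : FreeMonoid A} {i j d : ℕ} {l m : List (FreeMonoid A)}
    (hl : ∀ w ∈ bay a b i j :: l, w ∈ insert (apow a n) (Cword a b n M ω))
    (hm : ∀ w ∈ bay a b i (j + d) :: m, w ∈ insert (apow a n) (Cword a b n M ω))
    (h : l.prod = apow a d * m.prod) : n ∣ d := by
  obtain ⟨K₁, hK₁⟩ := exists_subst_mem_closure hab han ω _ hl
  obtain ⟨K₂, hK₂⟩ := exists_subst_mem_closure hab han ω _ hm
  have hK : K₁ + K₂ ≤ n * (K₁ + K₂) := Nat.le_mul_of_pos_left _ hn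
  replace hK₁ := hK₁ (n * (K₁ + K₂)) (by omega) (dvd_mul_right _ _)
  replace hK₂ := hK₂ (n * (K₁ + K₂)) (by omega) (dvd_mul_right _ _)
  generalize n * (K₁ + K₂) = K at hK₁ hK₂
  have hprod : ∀ l : List (FreeMonoid A), (∀ w ∈ l, subst a b ω K w ∈ Submonoid.closure M) →
      subst a b ω K l.prod ∈ Submonoid.closure M := fun l hl =>
    Submonoid.list_prod_mem ((Submonoid.closure M).comap (subst a b ω K)) hl
  refine hM.dvd_of_apow_mem_closure han (hM.mem_closure_of_stable
    (hK₁ _ List.mem_cons_self)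
    (hprod m fun w hw => hK₂ w (List.mem_cons_of_mem _ hw)) ?_ ?_)
  · have := hK₂ _ List.mem_cons_self
    rwa [bay, apow_add, ← mul_assoc, ← bay, map_mul, subst_apow hab] at this
  · have := hprod l fun w hw => hK₁ w (List.mem_cons_of_mem _ hw)
    rwa [h, map_mul, subst_apow hab] at this

/-- The right exponents of two bayonet words as in `dvd_of_bay_mul_eq` are equal when one of them
is at least the other and both are less than `n`. -/
theorem right_exponent_eq {a b : A} (hab : a ≠ b) {n : ℕ} (hn : 1 ≤ n) {M : Set (FreeMonoid A)}
    (hM : IsCode M) (han : apow a n ∈ M) {ω : FreeMonoid A} {i j j' : ℕ}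
    {l m : List (FreeMonoid A)} (hjj' : j ≤ j') (hj' : j' < n)
    (hl : ∀ w ∈ bay a b i j :: l, w ∈ insert (apow a n) (Cword a b n M ω))
    (hm : ∀ w ∈ bay a b i j' :: m, w ∈ insert (apow a n) (Cword a b n M ω))
    (h : bay a b i j * l.prod = bay a b i j' * m.prod) : j = j' := by
  obtain ⟨d, rfl⟩ := Nat.exists_eq_add_of_le hjj'
  have e : l.prod = apow a d * m.prod := by
    simp only [bay, apow_add, mul_assoc, mul_right_inj] at h
    exact h
  have := Nat.eq_zero_of_dvd_of_lt (dvd_of_bay_mul_eq hab hn hM han hl hm e) (by omega)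
  omega

theorem statement0 (a b : A) (hab : a ≠ b) (n : ℕ) (hn : 1 ≤ n)
    (M : Set (FreeMonoid A)) (hM : IsCode M) (han : apow a n ∈ M)
    (ω : FreeMonoid A) :
    IsCode (insert (apow a n) (Cword a b n M ω)) := by
  have hmod : ∀ k, k % n < n := fun k => Nat.mod_lt k hn
  -- No element of the set is the empty word.
  have hne : ∀ w ∈ insert (apow a n) (Cword a b n M ω), ∀ X : FreeMonoid A, w * X ≠ 1 := by
    intro w hw X hX
    have hlen := congrArg FreeMonoid.length hX
    rcases hw with rfl | ⟨i, j, -, rfl⟩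
    · obtain ⟨k, rfl⟩ := Nat.exists_eq_add_of_le' hn
      simp [apow, pow_succ] at hlen
    · simp [bay] at hlen
  intro l
  induction l with
  | nil =>
    intro m _ hm h
    cases m with
    | nil => rfl
    | cons y m =>
      rw [List.prod_nil, List.prod_cons] at h
      exact absurd h.symm (hne y (hm y List.mem_cons_self) _)
  | cons x l ih =>
    intro m hl hm h
    cases m with
    | nil =>
      rw [List.prod_nil, List.prod_cons] at h
      exact absurd h (hne x (hl x List.mem_cons_self) _)
    | cons y m =>
      suffices hxy : x = y by
        subst hxy
        rw [List.prod_cons, List.prod_cons] at h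
        rw [ih m (fun w hw => hl w (List.mem_cons_of_mem _ hw))
          (fun w hw => hm w (List.mem_cons_of_mem _ hw)) (mul_left_cancel h)]
      rw [List.prod_cons, List.prod_cons] at h
      rcases hl x List.mem_cons_self with rfl | ⟨i, j, -, rfl⟩ <;>
        rcases hm y List.mem_cons_self with rfl | ⟨i', j', -, rfl⟩
      · rfl
      · simp only [bay, mul_assoc] at h
        exact absurd h.symm (apow_mul_of_ne hab (hmod i') _ _)
      · simp only [bay, mul_assoc] at h
        exact absurd h (apow_mul_of_ne hab (hmod i) _ _)
      · have hi : i % n = i' % n := by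
          have h' := h
          simp only [bay, mul_assoc] at h'
          rcases lt_trichotomy (i % n) (i' % n) with hlt | heq | hlt
          · exact absurd h' (apow_mul_of_ne hab hlt _ _)
          · exact heq
          · exact absurd h'.symm (apow_mul_of_ne hab hlt _ _)
        rw [← hi] at h hm ⊢
        rcases le_total (j % n) (j' % n) with hle | hle
        · rw [right_exponent_eq hab hn hM han hle (hmod j') hl hm h]
        · rw [right_exponent_eq hab hn hM han hle (hmod j) hm hl h.symm]

end CBC
end

section
/- Every non-empty stable set S of n-cbc is bordered by one of its elements: there exists Y ∈ S such that for every R ∈ R(Y), the pair (R, L(Y)) is a factorization of size n that is a border of S. -/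
/-!
Identify an `n`-cbc with its set of exponent pairs `(i, j)`, a set of `n` elements of `[n)²`.
Choose `Y ∈ S` with the fewest non-empty rows, i.e. with `|L(Y)|` minimal.  Composing on the right
can only lose rows, so by minimality `Y ∘_r X` and `(Y ∘_r X) ∘_s Y` have exactly the same
non-empty rows as `Y`.  Read at a row `k ∈ L(Y)` with `R = R_k^n(Y)`, this says that
`R × L(Y) → ZMod n` and `R × X × L(Y) → (ZMod n)²` are surjective for every `X ∈ S`.

The first surjection gives `|R_k| |L(Y)| ≥ n` for each row.  The rows have average size `n / |L(Y)|`,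
since `∑_{k ∈ L(Y)} |R_k| = |Y| = n`; hence equality holds in every row.  Both maps are then
surjections between finite sets of the same size, hence bijections.  Apart from stability, the
argument only uses that each element of `S` has exactly `n` words, all with exponents below `n`.
-/

namespace CBC

variable {A : Type*}

/-! ### Exponent pairs and rows of an `n`-cbc -/

/-- The exponents of a bayonet word are determined by the word. -/
lemma bay_inj {a b : A} (hab : a ≠ b) {i j k l : ℕ} (h : bay a b i j = bay a b k l) :
    i = k ∧ j = l := by
  have key : ∀ i j, FreeMonoid.toList (bay a b i j) =
      List.replicate i a ++ b :: List.replicate j a := by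
    intro i j
    have hpow : ∀ i, FreeMonoid.toList (FreeMonoid.of a ^ i) = List.replicate i a := by
      intro i
      induction i with
      | zero => rfl
      | succ i ih => simp [pow_succ', FreeMonoid.toList_mul, ih, List.replicate_succ]
    simp [bay, apow, FreeMonoid.toList_mul, hpow]
  have h2 := congrArg FreeMonoid.toList h
  rw [key, key] at h2
  induction i generalizing k with
  | zero =>
    cases k with
    | zero =>
      have := congrArg List.length h2
      simp at this
      exact ⟨rfl, this⟩
    | succ k => simp [List.replicate_succ, hab.symm] at h2
  | succ i ih =>
    cases k with
    | zero => simp [List.replicate_succ, hab] at h2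
    | succ k =>
      simp only [List.replicate_succ, List.cons_append, List.cons.injEq, true_and] at h2
      have hb : bay a b i j = bay a b k l := by
        apply FreeMonoid.toList.injective
        rw [key, key, h2]
      have := ih hb h2
      omega

/-- The set of exponent pairs `(i, j)` of the bayonet words `a^i b a^j` in `X`. -/
def expPairs (a b : A) (X : Set (FreeMonoid A)) : Set (ℕ × ℕ) :=
  { p | bay a b p.1 p.2 ∈ X }

lemma IsCbc.lt {a b : A} (hab : a ≠ b) {n : ℕ} {X : Set (FreeMonoid A)} (hX : IsCbc a b n X)
    {i j : ℕ} (h : bay a b i j ∈ X) : i < n ∧ j < n := by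
  obtain ⟨i', hi, j', hj, e⟩ := hX.1 _ h
  obtain ⟨rfl, rfl⟩ := bay_inj hab e
  exact ⟨hi, hj⟩

lemma IsCbc.finite_expPairs {a b : A} (hab : a ≠ b) {n : ℕ} {X : Set (FreeMonoid A)}
    (hX : IsCbc a b n X) : (expPairs a b X).Finite := by
  refine ((Set.finite_Iio n).prod (Set.finite_Iio n)).subset ?_
  rintro ⟨i, j⟩ h
  exact hX.lt hab h

lemma IsCbc.ncard_expPairs {a b : A} (hab : a ≠ b) {n : ℕ} {X : Set (FreeMonoid A)}
    (hX : IsCbc a b n X) : (expPairs a b X).ncard = n := by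
  have hinj : Set.InjOn (fun p : ℕ × ℕ => bay a b p.1 p.2) (expPairs a b X) := by
    rintro ⟨i, j⟩ - ⟨k, l⟩ - h
    obtain ⟨rfl, rfl⟩ := bay_inj hab h
    rfl
  have him : (fun p : ℕ × ℕ => bay a b p.1 p.2) '' expPairs a b X = X := by
    ext w
    constructor
    · rintro ⟨p, hp, rfl⟩
      exact hp
    · intro hw
      obtain ⟨i, -, j, -, rfl⟩ := hX.1 _ hw
      exact ⟨(i, j), hw, rfl⟩
  rw [← Set.InjOn.ncard_image hinj, him, hX.2.1]

/-- For an `n`-cbc, the reductions modulo `n` in the definition of `L(X)` are superfluous. -/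
lemma IsCbc.mem_Lfull {a b : A} (hab : a ≠ b) {n : ℕ} {X : Set (FreeMonoid A)}
    (hX : IsCbc a b n X) {i : ℕ} : i ∈ Lfull a b n X ↔ ∃ j, bay a b i j ∈ X := by
  constructor
  · rintro ⟨i', j', h, rfl⟩
    rw [Nat.mod_eq_of_lt (hX.lt hab h).1]
    exact ⟨j', h⟩
  · rintro ⟨j, h⟩
    exact ⟨i, j, h, Nat.mod_eq_of_lt (hX.lt hab h).1⟩

lemma IsCbc.mem_Rset {a b : A} (hab : a ≠ b) {n : ℕ} {X : Set (FreeMonoid A)}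
    (hX : IsCbc a b n X) {k j : ℕ} : j ∈ Rset a b n X k ↔ bay a b k j ∈ X := by
  constructor
  · rintro ⟨i', j', h, rfl, rfl⟩
    rwa [Nat.mod_eq_of_lt (hX.lt hab h).1, Nat.mod_eq_of_lt (hX.lt hab h).2]
  · intro h
    exact ⟨k, j, h, Nat.mod_eq_of_lt (hX.lt hab h).1, Nat.mod_eq_of_lt (hX.lt hab h).2⟩

lemma IsCbc.finite_Lfull {a b : A} (hab : a ≠ b) {n : ℕ} {X : Set (FreeMonoid A)}
    (hX : IsCbc a b n X) : (Lfull a b n X).Finite := by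
  refine (Set.finite_Iio n).subset ?_
  intro i hi
  obtain ⟨j, h⟩ := (hX.mem_Lfull hab).1 hi
  exact (hX.lt hab h).1

lemma IsCbc.finite_Rset {a b : A} (hab : a ≠ b) {n : ℕ} {X : Set (FreeMonoid A)}
    (hX : IsCbc a b n X) (k : ℕ) : (Rset a b n X k).Finite := by
  refine (Set.finite_Iio n).subset ?_
  intro j hj
  exact (hX.lt hab ((hX.mem_Rset hab).1 hj)).2

/-! ### Row sizes -/

/-- If every non-empty row `R_k` of an `n`-cbc satisfies `n ≤ |R_k| |L(X)|`, then equality holds in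
every row, because the sizes of the rows add up to `n`. -/
lemma IsCbc.card_row_mul {a b : A} (hab : a ≠ b) {n : ℕ} {X : Set (FreeMonoid A)}
    (hX : IsCbc a b n X)
    (h : ∀ k ∈ Lfull a b n X, n ≤ (Rset a b n X k).ncard * (Lfull a b n X).ncard) :
    ∀ k ∈ Lfull a b n X, (Rset a b n X k).ncard * (Lfull a b n X).ncard = n := by
  classical
  set F := (hX.finite_expPairs hab).toFinset with hF
  have hmem : ∀ p : ℕ × ℕ, p ∈ F ↔ bay a b p.1 p.2 ∈ X := by
    intro p
    simp [hF, expPairs]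
  have hL : (↑(F.image Prod.fst) : Set ℕ) = Lfull a b n X := by
    ext i
    simp [hX.mem_Lfull hab, hmem]
  have hLc : (Lfull a b n X).ncard = (F.image Prod.fst).card := by
    rw [← hL, Set.ncard_coe_finset]
  have hR : ∀ k, (Rset a b n X k).ncard = (F.filter (fun p => p.1 = k)).card := by
    intro k
    have : (↑(F.filter (fun p => p.1 = k)) : Set (ℕ × ℕ)) =
        (fun j => (k, j)) '' Rset a b n X k := by
      ext ⟨i, j⟩
      simp only [Finset.coe_filter, hmem, Set.mem_ofPred_eq, Set.mem_image, hX.mem_Rset hab,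
        Prod.mk.injEq]
      constructor
      · rintro ⟨h, rfl⟩
        exact ⟨j, h, rfl, rfl⟩
      · rintro ⟨j, h, rfl, rfl⟩
        exact ⟨h, rfl⟩
    rw [← Set.ncard_coe_finset, this,
      Set.ncard_image_of_injective _ (fun x y hxy => (Prod.mk.inj hxy).2)]
  have hsum : ∑ k ∈ F.image Prod.fst, (Rset a b n X k).ncard = n := by
    simp_rw [hR]
    rw [← Finset.card_eq_sum_card_image, ← Set.ncard_coe_finset, hF, Set.Finite.coe_toFinset,
      hX.ncard_expPairs hab]
  have hmemL : ∀ k, k ∈ F.image Prod.fst ↔ k ∈ Lfull a b n X := by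
    intro k
    rw [← hL, Finset.mem_coe]
  have heq : ∑ _k ∈ F.image Prod.fst, n =
      ∑ k ∈ F.image Prod.fst, (Rset a b n X k).ncard * (Lfull a b n X).ncard := by
    rw [← Finset.sum_mul, hsum, Finset.sum_const, hLc, smul_eq_mul, mul_comm]
  have := (Finset.sum_eq_sum_iff_of_le (fun k hk => h k ((hmemL k).1 hk))).1 heq
  exact fun k hk => (this k ((hmemL k).2 hk)).symm

/-! ### Counting arguments modulo `n` -/

/-- A surjection from a finite set onto a type of the same size is a bijection. -/
lemma existsUnique_of_surj {α β : Type*} [Finite β] {s : Set α} (hs : s.Finite) (f : α → β)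
    (hsurj : ∀ c, ∃ t ∈ s, f t = c) (hcard : s.ncard = Nat.card β) (c : β) :
    ∃! t, t ∈ s ∧ f t = c := by
  have him : f '' s = Set.univ := Set.eq_univ_of_forall fun c => hsurj c
  have hinj : Set.InjOn f s :=
    Set.injOn_of_ncard_image_eq (by rw [him, Set.ncard_univ, hcard]) hs
  obtain ⟨t, ht, rfl⟩ := hsurj c
  exact ⟨t, ⟨ht, rfl⟩, fun u hu => hinj hu.1 ht hu.2⟩

lemma natCast_add_eq {n : ℕ} [NeZero n] {x y : ℕ} {c : ZMod n} (h : (x + y) % n = c.val) :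
    (x : ZMod n) + (y : ZMod n) = c := by
  have := congrArg (Nat.cast : ℕ → ZMod n) h
  simpa using this

lemma ncard_toZ (s : Set ℕ) : (toZ s).ncard = s.ncard :=
  Set.ncard_image_of_injective _ Nat.cast_injective

lemma ncard_toZModN {n : ℕ} {s : Set ℕ} (hs : ∀ i ∈ s, i < n) :
    (toZModN n s).ncard = s.ncard := by
  refine Set.InjOn.ncard_image ?_
  intro i hi j hj h
  have h' := (ZMod.natCast_eq_natCast_iff' i j n).1 h
  rwa [Nat.mod_eq_of_lt (hs i hi), Nat.mod_eq_of_lt (hs j hj)] at h'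

/-! ### Bordering by an element with the fewest rows -/

theorem statement3 (a b : A) (hab : a ≠ b) (n : ℕ) (hn : 1 ≤ n)
    (S : Set (Set (FreeMonoid A))) (hS : StableSet a b n S) (hne : S.Nonempty) :
    ∃ Y ∈ S, CbcBorders a b n Y S := by
  obtain ⟨hcbc, hcomp⟩ := hS
  have : NeZero n := ⟨by omega⟩
  obtain ⟨Y, hY, hmin⟩ :=
    (measure fun Z : Set (FreeMonoid A) => (Lfull a b n Z).ncard).wf.has_min S hne
  have hYc := hcbc Y hY
  have hrows : ∀ Z ∈ S, Lfull a b n Z ⊆ Lfull a b n Y → Lfull a b n Z = Lfull a b n Y :=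
    fun Z hZ hsub => Set.eq_of_subset_of_ncard_le hsub (not_lt.1 (hmin Z hZ))
      (hYc.finite_Lfull hab)
  have hsub : ∀ Z ∈ S, ∀ X ∈ S, ∀ r < n,
      Lfull a b n (comp a b n r Z X) ⊆ Lfull a b n Z := by
    intro Z hZ X hX r hr i hi
    obtain ⟨l, i', j, k, l', h1, -, -, e⟩ :=
      ((hcbc _ (hcomp Z hZ X hX r hr)).mem_Lfull hab).1 hi
    obtain ⟨rfl, rfl⟩ := bay_inj hab e
    exact ((hcbc Z hZ).mem_Lfull hab).2 ⟨j, h1⟩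
  -- Row `i` of `Y ∘_r Y` is non-empty.
  have surj1 : ∀ i ∈ Lfull a b n Y, ∀ c : ZMod n, ∃ j ∈ Rset a b n Y i,
      ∃ k ∈ Lfull a b n Y, (j : ZMod n) + (k : ZMod n) = c := by
    intro i hi c
    have hZ := hcomp Y hY Y hY c.val (ZMod.val_lt c)
    rw [← hrows _ hZ (hsub Y hY Y hY _ (ZMod.val_lt c)), (hcbc _ hZ).mem_Lfull hab] at hi
    obtain ⟨l, i', j, k, l', h1, h2, h3, e⟩ := hi
    obtain ⟨rfl, rfl⟩ := bay_inj hab e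
    exact ⟨j, (hYc.mem_Rset hab).2 h1, k, (hYc.mem_Lfull hab).2 ⟨_, h2⟩, natCast_add_eq h3⟩
  -- Row `i` of `(Y ∘_r X) ∘_s Y` is non-empty.
  have surj2 : ∀ X ∈ S, ∀ i ∈ Lfull a b n Y, ∀ c d : ZMod n, ∃ j ∈ Rset a b n Y i,
      ∃ p : ℕ × ℕ, bay a b p.1 p.2 ∈ X ∧ ∃ k ∈ Lfull a b n Y,
        (j : ZMod n) + (p.1 : ZMod n) = c ∧ (p.2 : ZMod n) + (k : ZMod n) = d := by
    intro X hX i hi c d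
    have hZ := hcomp Y hY X hX c.val (ZMod.val_lt c)
    have hW := hcomp _ hZ Y hY d.val (ZMod.val_lt d)
    rw [← hrows _ hW ((hsub _ hZ Y hY _ (ZMod.val_lt d)).trans
      (hsub Y hY X hX _ (ZMod.val_lt c))), (hcbc _ hW).mem_Lfull hab] at hi
    obtain ⟨l, i', j, k, l', ⟨i'', j', p, q, h1, h2, h3, e'⟩, h4, h5, e⟩ := hi
    obtain ⟨rfl, rfl⟩ := bay_inj hab e
    obtain ⟨rfl, rfl⟩ := bay_inj hab e'
    exact ⟨j', (hYc.mem_Rset hab).2 h1, (p, j), h2, k, (hYc.mem_Lfull hab).2 ⟨_, h4⟩,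
      natCast_add_eq h3, natCast_add_eq h5⟩
  have hRlt : ∀ i, ∀ j ∈ Rset a b n Y i, j < n :=
    fun i j hj => (hYc.lt hab ((hYc.mem_Rset hab).1 hj)).2
  have hLlt : ∀ i ∈ Lfull a b n Y, i < n := by
    intro i hi
    obtain ⟨j, hj⟩ := (hYc.mem_Lfull hab).1 hi
    exact (hYc.lt hab hj).1
  have hrow : ∀ i ∈ Lfull a b n Y,
      (Rset a b n Y i).ncard * (Lfull a b n Y).ncard = n := by
    refine hYc.card_row_mul hab fun i hi => ?_
    have him : (fun p : ℕ × ℕ => (p.1 : ZMod n) + (p.2 : ZMod n)) ''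
        (Rset a b n Y i ×ˢ Lfull a b n Y) = Set.univ := by
      refine Set.eq_univ_of_forall fun c => ?_
      obtain ⟨j, hj, k, hk, e⟩ := surj1 i hi c
      exact ⟨(j, k), ⟨hj, hk⟩, e⟩
    have hle := Set.ncard_image_le (f := fun p : ℕ × ℕ => (p.1 : ZMod n) + (p.2 : ZMod n))
      ((hYc.finite_Rset hab i).prod (hYc.finite_Lfull hab))
    rwa [him, Set.ncard_univ, Nat.card_zmod, Set.ncard_prod] at hle
  refine ⟨Y, hY, ?_⟩
  rintro R ⟨i, hi, rfl⟩
  constructor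
  · intro c
    have := existsUnique_of_surj
      (s := toZModN n (Rset a b n Y i) ×ˢ toZModN n (Lfull a b n Y)) (Set.toFinite _)
      (fun pq => pq.1 + pq.2) ?_ ?_ c
    · simpa only [Set.mem_prod, and_assoc] using this
    · intro c
      obtain ⟨j, hj, k, hk, e⟩ := surj1 i hi c
      exact ⟨(j, k), ⟨⟨j, hj, rfl⟩, ⟨k, hk, rfl⟩⟩, e⟩
    · rw [Set.ncard_prod, ncard_toZModN (hRlt i), ncard_toZModN hLlt, hrow i hi, Nat.card_zmod]
  · intro X hX c
    have hXc := hcbc X hX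
    have := existsUnique_of_surj
      (s := toZ (Rset a b n Y i) ×ˢ (expPairs a b X ×ˢ toZ (Lfull a b n Y)))
      (((hYc.finite_Rset hab i).image _).prod
        ((hXc.finite_expPairs hab).prod ((hYc.finite_Lfull hab).image _)))
      (fun t => ((t.1 : ZMod n) + (t.2.1.1 : ZMod n), (t.2.1.2 : ZMod n) + (t.2.2 : ZMod n)))
      ?_ ?_ c
    · simpa only [Set.mem_prod, and_assoc, expPairs, Set.mem_ofPred_eq, Prod.ext_iff] using this
    · rintro ⟨c, d⟩
      obtain ⟨j, hj, p, hp, k, hk, e1, e2⟩ := surj2 X hX i hi c d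
      refine ⟨(j, p, k), ⟨⟨j, hj, rfl⟩, hp, ⟨k, hk, rfl⟩⟩, ?_⟩
      simp [e1, e2]
    · rw [Set.ncard_prod, Set.ncard_prod, ncard_toZ, ncard_toZ, hXc.ncard_expPairs hab,
        Nat.card_prod, Nat.card_zmod, mul_left_comm, hrow i hi]

end CBC
end
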